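/- Assume A_{∂I}ᵀA_{∂I} is invertible, so F has a unique minimizer x(y). For every partition of ∂I₀ into two disjoint sets K⁻ ∪ K⁺ = ∂I₀ with K⁻ ≠ ∅, the probability P(X_β ∈ {x ∈ ℝ^p : xᵢξᵢ ≤ 0 for all i ∈ K⁻ and xᵢξᵢ ≥ 0 for all i ∈ K⁺}), i.e. the ratio of ∫ over this set of exp(−2βF(x)) dx to Z_β = ∫_{ℝ^p} exp(−2βF(x)) dx, tends to 0 as β → +∞. -/

import Mathlib

open MeasureTheory

/-!
The posterior `exp (-2βF) / Z` is compared with its own images under affine maps: if an affine map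
`T` increases `2βF` by at most `δ` on a set `s`, then a change of variables gives
`P(s) ≤ exp δ / |det T|`. Two maps are used. The contraction by `1/2` towards the minimizer `x₀`
shows, by convexity, that `2β(F - F x₀)` exceeds `M` with probability at most
`2 ^ p * exp (-M / 2)`. Where it does not exceed `M`, a point with `xₖ ξₖ ≤ 0` satisfies
`2|xₖ| ≤ F x - F x₀ ≤ M / (2β)`, so the map `xₖ ↦ -L xₖ`, of determinant `-L`, moves it by `O(1/β)`
only, to the side of the hyperplane where `|xₖ| - ξₖ xₖ = 0`. For fixed `L` this increases `2βF` by
at most `M + O(1/β)`, so such points have probability at most about `exp M / L`. Take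
`L = exp (2M)` and let `β → ∞`, then `M → ∞`.
-/

open Filter Topology

section Tilted

theorem tilted_real_apply {α : Type*} [MeasurableSpace α] (μ : Measure α) [SFinite μ] (f : α → ℝ)
    (s : Set α) :
    (μ.tilted f).real s = (∫ x in s, Real.exp (f x) ∂μ) / ∫ x, Real.exp (f x) ∂μ := by
  rw [measureReal_def, tilted_apply_eq_ofReal_integral, integral_div,
    ENNReal.toReal_ofReal (by positivity)]

variable {E : Type*} [NormedAddCommGroup E] [NormedSpace ℝ E] [FiniteDimensional ℝ E]
  [MeasurableSpace E] [BorelSpace E]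

theorem map_affineMap_addHaar_eq_smul_addHaar (μ : Measure E) [μ.IsAddHaarMeasure]
    {T : E →ᵃ[ℝ] E} (hT : T.linear.det ≠ 0) :
    μ.map T = ENNReal.ofReal |T.linear.det⁻¹| • μ := by
  have hcomp : ⇑T = (· + T 0) ∘ T.linear := T.decomp
  rw [hcomp, ← Measure.map_map (measurable_add_const _)
      (LinearMap.continuous_of_finiteDimensional _).measurable,
    Measure.map_linearMap_addHaar_eq_smul_addHaar μ hT, Measure.map_smul, map_add_right_eq_self]

variable {μ : Measure E} [μ.IsAddHaarMeasure] {f : E → ℝ}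

theorem tilted_real_le_of_affineMap (hf : Measurable f) {T : E →ᵃ[ℝ] E}
    (hT : T.linear.det ≠ 0) {s : Set E} {δ : ℝ} (hs : ∀ x ∈ s, f x ≤ f (T x) + δ) :
    (μ.tilted f).real s ≤ Real.exp δ / |T.linear.det| := by
  set ρ : E → ENNReal := fun x ↦ ENNReal.ofReal (Real.exp (f x) / ∫ z, Real.exp (f z) ∂μ) with hρ
  have hρ_meas : Measurable ρ := by fun_prop
  have hT_meas : Measurable T := (AffineMap.continuous_of_finiteDimensional T).measurable
  have hρ_le : ∀ x ∈ s, ρ x ≤ ENNReal.ofReal (Real.exp δ) * ρ (T x) := fun x hx ↦ by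
    rw [← ENNReal.ofReal_mul (Real.exp_nonneg δ), ← mul_div_assoc, ← Real.exp_add, add_comm δ]
    simp only [hρ]
    gcongr
    exact hs x hx
  refine ENNReal.toReal_le_of_le_ofReal (by positivity) ?_
  calc μ.tilted f s = ∫⁻ x in s, ρ x ∂μ := tilted_apply μ f s
    _ ≤ ∫⁻ x in s, ENNReal.ofReal (Real.exp δ) * ρ (T x) ∂μ :=
      setLIntegral_mono (by fun_prop) hρ_le
    _ ≤ ∫⁻ x, ENNReal.ofReal (Real.exp δ) * ρ (T x) ∂μ := setLIntegral_le_lintegral _ _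
    _ = ENNReal.ofReal (Real.exp δ) * ∫⁻ x, ρ x ∂(μ.map T) := by
      rw [lintegral_map hρ_meas hT_meas, lintegral_const_mul _ (by fun_prop)]
    _ = ENNReal.ofReal (Real.exp δ) * (ENNReal.ofReal |T.linear.det⁻¹| * μ.tilted f Set.univ) := by
      rw [map_affineMap_addHaar_eq_smul_addHaar μ hT, lintegral_smul_measure, smul_eq_mul,
        tilted_apply μ f, setLIntegral_univ]
    _ ≤ ENNReal.ofReal (Real.exp δ) * (ENNReal.ofReal |T.linear.det⁻¹| * 1) := by
      gcongr
      exact prob_le_one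
    _ = ENNReal.ofReal (Real.exp δ / |T.linear.det|) := by
      rw [mul_one, ← ENNReal.ofReal_mul (Real.exp_nonneg δ), abs_inv, div_eq_mul_inv]

theorem tilted_real_setOf_le_sub_le_of_concaveOn (hf : ConcaveOn ℝ Set.univ f) (x₀ : E) (M : ℝ) :
    (μ.tilted f).real {x | f x ≤ f x₀ - M} ≤ 2 ^ Module.finrank ℝ E * Real.exp (-M / 2) := by
  have hf_cont : Continuous f := continuousOn_univ.1 (hf.continuousOn isOpen_univ)
  have hdet : (AffineMap.homothety x₀ (2⁻¹ : ℝ)).linear.det = (2 ^ Module.finrank ℝ E)⁻¹ := by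
    rw [AffineMap.homothety_linear, LinearMap.det_smul, LinearMap.det_id, mul_one, inv_pow]
  have hmidpoint (x : E) : 2⁻¹ * f x₀ + 2⁻¹ * f x ≤ f (AffineMap.homothety x₀ (2⁻¹ : ℝ) x) := by
    have happly : AffineMap.homothety x₀ (2⁻¹ : ℝ) x = (2⁻¹ : ℝ) • x₀ + (2⁻¹ : ℝ) • x := by
      rw [AffineMap.homothety_apply, vsub_eq_sub, vadd_eq_add]
      module
    rw [happly]
    exact hf.2 (Set.mem_univ x₀) (Set.mem_univ x) (by norm_num) (by norm_num) (by norm_num)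
  have hincrease : ∀ x ∈ {x | f x ≤ f x₀ - M},
      f x ≤ f (AffineMap.homothety x₀ (2⁻¹ : ℝ) x) + -M / 2 := by
    rintro x (hx : f x ≤ f x₀ - M)
    linarith [hmidpoint x]
  refine (tilted_real_le_of_affineMap hf_cont.measurable
    (by rw [hdet]; positivity) hincrease).trans_eq ?_
  rw [hdet, abs_of_pos (by positivity), div_inv_eq_mul, mul_comm]

end Tilted

section ReflectStretch

variable {ι κ : Type*} [DecidableEq ι]

/-- The linear map multiplying the `k`-th coordinate by `-L` and fixing the others: it carries the
half-space `x k ≤ 0` onto `0 ≤ x k`, stretched by a factor `L`. -/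
noncomputable def reflectStretch (k : ι) (L : ℝ) : (ι → ℝ) →ₗ[ℝ] (ι → ℝ) :=
  LinearMap.transvection (-(1 + L) • LinearMap.proj k) (Pi.single k 1)

theorem reflectStretch_apply (k : ι) (L : ℝ) (x : ι → ℝ) :
    reflectStretch k L x = x - Pi.single k ((1 + L) * x k) := by
  ext i
  obtain rfl | hi := eq_or_ne i k
  · simp [reflectStretch, LinearMap.transvection.apply]
    ring
  · simp [reflectStretch, LinearMap.transvection.apply, hi]

theorem reflectStretch_apply_same (k : ι) (L : ℝ) (x : ι → ℝ) :
    reflectStretch k L x k = -(L * x k) := by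
  rw [reflectStretch_apply, Pi.sub_apply, Pi.single_eq_same]
  ring

theorem reflectStretch_apply_of_ne {i k : ι} (hi : i ≠ k) (L : ℝ) (x : ι → ℝ) :
    reflectStretch k L x i = x i := by
  rw [reflectStretch_apply, Pi.sub_apply, Pi.single_eq_of_ne hi, sub_zero]

theorem det_reflectStretch [Finite ι] (k : ι) (L : ℝ) : (reflectStretch k L).det = -L := by
  simp [reflectStretch]

variable [Fintype ι] [Fintype κ]

theorem sum_abs_sub_mul_reflectStretch_le {ξ x : ι → ℝ} {k : ι} {L : ℝ} (hL : 0 ≤ L)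
    (hx : x k * ξ k = -|x k|) :
    ∑ i, (|reflectStretch k L x i| - ξ i * reflectStretch k L x i) ≤
      ∑ i, (|x i| - ξ i * x i) := by
  refine Finset.sum_le_sum fun i _ ↦ ?_
  obtain rfl | hi := eq_or_ne i k
  · rw [reflectStretch_apply_same, abs_neg, abs_mul, abs_of_nonneg hL]
    have hreflected : ξ i * -(L * x i) = L * |x i| := by linear_combination -L * hx
    linarith [abs_nonneg (x i)]
  · rw [reflectStretch_apply_of_ne hi]

theorem sum_sq_mulVec_reflectStretch_sub_le (A : Matrix κ ι ℝ) (x₀ x : ι → ℝ) (k : ι) (L : ℝ) :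
    ∑ j, (A.mulVec (reflectStretch k L x - x₀) j) ^ 2 ≤
      2 * (∑ j, (A.mulVec (x - x₀) j) ^ 2) + 2 * ((1 + L) * x k) ^ 2 * ∑ j, A j k ^ 2 := by
  simp only [Finset.mul_sum, ← Finset.sum_add_distrib]
  refine Finset.sum_le_sum fun j _ ↦ ?_
  have hshift : A.mulVec (reflectStretch k L x - x₀) j =
      A.mulVec (x - x₀) j - A j k * ((1 + L) * x k) := by
    rw [reflectStretch_apply, sub_right_comm, Matrix.mulVec_sub, Pi.sub_apply,
      Matrix.mulVec_single]
    rfl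
  rw [hshift]
  linarith [sq_nonneg (A.mulVec (x - x₀) j + A j k * ((1 + L) * x k))]

end ReflectStretch

section Lasso

variable {ι κ : Type*} [Fintype ι] [Fintype κ]

/-- The lasso objective `‖x‖₁ + ‖Ax - y‖² / 2`, with the Euclidean norm written as a sum of
squares since `κ → ℝ` carries the supremum norm. -/
noncomputable def lassoObjective (A : Matrix κ ι ℝ) (y : κ → ℝ) (x : ι → ℝ) : ℝ :=
  (∑ i, |x i|) + (∑ j, (A.mulVec x j - y j) ^ 2) / 2

/-- The correlations `Aᵀ(y - Ax)` of the columns of `A` with the residual; at a minimizer of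
`lassoObjective A y` this is the dual vector `ξ`. -/
def residualCorrelation (A : Matrix κ ι ℝ) (y : κ → ℝ) (x : ι → ℝ) : ι → ℝ :=
  A.transpose.mulVec (y - A.mulVec x)

theorem convexOn_finset_sum {𝕜 E α β : Type*} [Semiring 𝕜] [PartialOrder 𝕜] [AddCommMonoid E]
    [AddCommMonoid β] [PartialOrder β] [IsOrderedAddMonoid β] [SMul 𝕜 E] [Module 𝕜 β]
    {t : Finset α} {s : Set E} {f : α → E → β} (hs : Convex 𝕜 s)
    (hf : ∀ i ∈ t, ConvexOn 𝕜 s (f i)) : ConvexOn 𝕜 s (∑ i ∈ t, f i) :=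
  Finset.sum_induction f (ConvexOn 𝕜 s) (fun _ _ ↦ ConvexOn.add) (convexOn_const 0 hs) hf

theorem convexOn_lassoObjective (A : Matrix κ ι ℝ) (y : κ → ℝ) :
    ConvexOn ℝ Set.univ (lassoObjective A y) := by
  have habs (i : ι) : ConvexOn ℝ Set.univ fun x : ι → ℝ ↦ |x i| :=
    (convexOn_univ_norm (E := ℝ)).comp_linearMap (LinearMap.proj (R := ℝ) (φ := fun _ : ι ↦ ℝ) i)
  have hsq (j : κ) : ConvexOn ℝ Set.univ fun x : ι → ℝ ↦ (A.mulVec x j - y j) ^ 2 :=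
    (even_two.convexOn_pow (𝕜 := ℝ)).comp_affineMap
      ((LinearMap.proj j ∘ₗ A.mulVecLin).toAffineMap - AffineMap.const ℝ (ι → ℝ) (y j))
  refine ((convexOn_finset_sum convex_univ fun i (_ : i ∈ Finset.univ) ↦ habs i).add
    ((convexOn_finset_sum convex_univ fun j (_ : j ∈ Finset.univ) ↦ hsq j).smul
      (c := (2⁻¹ : ℝ)) (by positivity))).congr fun x _ ↦ ?_
  simp [lassoObjective, div_eq_inv_mul]

theorem lassoObjective_eq_add (A : Matrix κ ι ℝ) (y : κ → ℝ) (x₀ x : ι → ℝ) :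
    lassoObjective A y x = lassoObjective A y x₀ +
      ∑ i, (|x i| - |x₀ i| - residualCorrelation A y x₀ i * (x i - x₀ i)) +
      (∑ j, (A.mulVec (x - x₀) j) ^ 2) / 2 := by
  have hadjoint : ∑ i, residualCorrelation A y x₀ i * (x i - x₀ i) =
      ∑ j, (y j - A.mulVec x₀ j) * A.mulVec (x - x₀) j := by
    change residualCorrelation A y x₀ ⬝ᵥ (x - x₀) = (y - A.mulVec x₀) ⬝ᵥ A.mulVec (x - x₀)
    rw [residualCorrelation, Matrix.mulVec_transpose, Matrix.dotProduct_mulVec]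
  have hsq : ∑ j, (A.mulVec x j - y j) ^ 2 = ∑ j, (A.mulVec x₀ j - y j) ^ 2 -
      2 * (∑ j, (y j - A.mulVec x₀ j) * A.mulVec (x - x₀) j) +
      ∑ j, (A.mulVec (x - x₀) j) ^ 2 := by
    simp only [Matrix.mulVec_sub, Pi.sub_apply, Finset.mul_sum, ← Finset.sum_sub_distrib,
      ← Finset.sum_add_distrib]
    exact Finset.sum_congr rfl fun j _ ↦ by ring
  simp only [lassoObjective, Finset.sum_sub_distrib, hadjoint, hsq]
  ring

theorem lassoObjective_add_single [DecidableEq ι] (A : Matrix κ ι ℝ) (y : κ → ℝ) (x : ι → ℝ)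
    (i : ι) (t : ℝ) :
    lassoObjective A y (x + Pi.single i t) = lassoObjective A y x +
      (|x i + t| - |x i| - residualCorrelation A y x i * t) + t ^ 2 * (∑ j, A j i ^ 2) / 2 := by
  rw [lassoObjective_eq_add A y x, Finset.sum_eq_single i
    (fun b _ hb ↦ by simp [Pi.single_eq_of_ne hb]) (by simp)]
  simp [mul_pow, Finset.mul_sum, mul_comm]

theorem nonneg_of_forall_add_mul_nonneg {a b : ℝ} (h : ∀ t, 0 < t → t ≤ 1 → 0 ≤ a + t * b) :
    0 ≤ a := by
  have htendsto : Tendsto (fun t : ℝ ↦ a + t * b) (𝓝[>] 0) (𝓝 (a + 0 * b)) :=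
    (Continuous.tendsto (by fun_prop) 0).mono_left nhdsWithin_le_nhds
  rw [zero_mul, add_zero] at htendsto
  refine ge_of_tendsto htendsto ?_
  filter_upwards [Ioc_mem_nhdsGT one_pos] with t ht using h t ht.1 ht.2

section Minimizer

variable {A : Matrix κ ι ℝ} {y : κ → ℝ} {x₀ : ι → ℝ}
  (hx₀ : IsMinOn (lassoObjective A y) Set.univ x₀)

include hx₀

theorem abs_sub_residualCorrelation_mul_le_of_isMinOn (i : ι) (s : ℝ) :
    |x₀ i| - residualCorrelation A y x₀ i * x₀ i ≤ |s| - residualCorrelation A y x₀ i * s := by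
  classical
  set ξ := residualCorrelation A y x₀
  refine sub_nonneg.1 (nonneg_of_forall_add_mul_nonneg
    (b := (s - x₀ i) ^ 2 * (∑ j, A j i ^ 2) / 2) fun t ht ht1 ↦ ?_)
  have hmin := isMinOn_univ_iff.1 hx₀ (x₀ + Pi.single i (t * (s - x₀ i)))
  rw [lassoObjective_add_single] at hmin
  have hconvex : |x₀ i + t * (s - x₀ i)| ≤ (1 - t) * |x₀ i| + t * |s| := by
    calc |x₀ i + t * (s - x₀ i)| = |(1 - t) * x₀ i + t * s| := by ring_nf
      _ ≤ |(1 - t) * x₀ i| + |t * s| := abs_add_le _ _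
      _ = (1 - t) * |x₀ i| + t * |s| := by
        rw [abs_mul, abs_mul, abs_of_pos ht, abs_of_nonneg (sub_nonneg.2 ht1)]
  refine nonneg_of_mul_nonneg_right ?_ ht
  linarith

theorem residualCorrelation_mul_eq_abs_of_isMinOn (i : ι) :
    residualCorrelation A y x₀ i * x₀ i = |x₀ i| := by
  have hzero := abs_sub_residualCorrelation_mul_le_of_isMinOn hx₀ i 0
  have hdouble := abs_sub_residualCorrelation_mul_le_of_isMinOn hx₀ i (2 * x₀ i)
  rw [abs_zero] at hzero
  rw [abs_mul, abs_two] at hdouble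
  linarith

theorem residualCorrelation_mul_le_abs_of_isMinOn (i : ι) (s : ℝ) :
    residualCorrelation A y x₀ i * s ≤ |s| := by
  linarith [abs_sub_residualCorrelation_mul_le_of_isMinOn hx₀ i s,
    residualCorrelation_mul_eq_abs_of_isMinOn hx₀ i]

theorem lassoObjective_eq_add_of_isMinOn (x : ι → ℝ) :
    lassoObjective A y x = lassoObjective A y x₀ +
      ∑ i, (|x i| - residualCorrelation A y x₀ i * x i) +
      (∑ j, (A.mulVec (x - x₀) j) ^ 2) / 2 := by
  rw [lassoObjective_eq_add A y x₀ x]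
  congr 2
  refine Finset.sum_congr rfl fun i _ ↦ ?_
  linarith [residualCorrelation_mul_eq_abs_of_isMinOn hx₀ i]

theorem two_mul_abs_add_le_lassoObjective_sub {x : ι → ℝ} {k : ι}
    (hx : x k * residualCorrelation A y x₀ k = -|x k|) :
    2 * |x k| + (∑ j, (A.mulVec (x - x₀) j) ^ 2) / 2 ≤
      lassoObjective A y x - lassoObjective A y x₀ := by
  have hterm := Finset.single_le_sum (fun i _ ↦
    sub_nonneg.2 (residualCorrelation_mul_le_abs_of_isMinOn hx₀ i (x i))) (Finset.mem_univ k)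
  linarith [lassoObjective_eq_add_of_isMinOn hx₀ x]

theorem lassoObjective_reflectStretch_le [DecidableEq ι] {x : ι → ℝ} {k : ι} {L : ℝ} (hL : 0 ≤ L)
    (hx : x k * residualCorrelation A y x₀ k = -|x k|) :
    lassoObjective A y (reflectStretch k L x) ≤ lassoObjective A y x +
      (lassoObjective A y x - lassoObjective A y x₀) + (1 + L) ^ 2 * (∑ j, A j k ^ 2) / 4 *
        (lassoObjective A y x - lassoObjective A y x₀) ^ 2 := by
  have hexcess := two_mul_abs_add_le_lassoObjective_sub hx₀ hx
  have hquad : 0 ≤ ∑ j, (A.mulVec (x - x₀) j) ^ 2 := by positivity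
  set D := lassoObjective A y x - lassoObjective A y x₀
  have hcoord : x k ^ 2 ≤ D ^ 2 / 4 := by
    have : |2 * x k| ≤ D := by rw [abs_mul, abs_two]; linarith
    linarith [sq_le_sq' (neg_le_of_abs_le this) (le_of_abs_le this)]
  have hshift : ((1 + L) * x k) ^ 2 * ∑ j, A j k ^ 2 ≤
      (1 + L) ^ 2 * (∑ j, A j k ^ 2) / 4 * D ^ 2 := by
    calc ((1 + L) * x k) ^ 2 * ∑ j, A j k ^ 2
        = (1 + L) ^ 2 * (∑ j, A j k ^ 2) * x k ^ 2 := by ring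
      _ ≤ (1 + L) ^ 2 * (∑ j, A j k ^ 2) * (D ^ 2 / 4) := by gcongr
      _ = (1 + L) ^ 2 * (∑ j, A j k ^ 2) / 4 * D ^ 2 := by ring
  linarith [abs_nonneg (x k), lassoObjective_eq_add_of_isMinOn hx₀ x,
    lassoObjective_eq_add_of_isMinOn hx₀ (reflectStretch k L x),
    sum_abs_sub_mul_reflectStretch_le hL hx, sum_sq_mulVec_reflectStretch_sub_le A x₀ x k L]

end Minimizer

end Lasso

section Posterior

variable {ι κ : Type*} [Fintype ι] [Fintype κ]

/-- The law of `X_β`, with density proportional to `exp (-2βF)` for the lasso objective `F`. -/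
noncomputable def lassoPosterior (A : Matrix κ ι ℝ) (y : κ → ℝ) (β : ℝ) : Measure (ι → ℝ) :=
  volume.tilted fun x ↦ -2 * β * lassoObjective A y x

instance isFiniteMeasure_lassoPosterior (A : Matrix κ ι ℝ) (y : κ → ℝ) (β : ℝ) :
    IsFiniteMeasure (lassoPosterior A y β) := by
  unfold lassoPosterior
  infer_instance

variable {A : Matrix κ ι ℝ} {y : κ → ℝ} {β : ℝ}

theorem lassoPosterior_real_setOf_lt_le (hβ : 0 ≤ β) (x₀ : ι → ℝ) (M : ℝ) :
    (lassoPosterior A y β).real {x | M < 2 * β * (lassoObjective A y x - lassoObjective A y x₀)} ≤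
      2 ^ Fintype.card ι * Real.exp (-M / 2) := by
  have hconcave : ConcaveOn ℝ Set.univ fun x ↦ -2 * β * lassoObjective A y x := by
    refine ((convexOn_lassoObjective A y).smul (by positivity : 0 ≤ 2 * β)).neg.congr fun x _ ↦ ?_
    simp
  refine (measureReal_mono fun x hx ↦ ?_).trans
    ((tilted_real_setOf_le_sub_le_of_concaveOn hconcave x₀ M).trans_eq
      (by rw [Module.finrank_fintype_fun_eq_card]))
  rw [Set.mem_ofPred_eq] at hx ⊢
  linarith

variable {x₀ : ι → ℝ} (hx₀ : IsMinOn (lassoObjective A y) Set.univ x₀) {k : ι}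
  (hk : |residualCorrelation A y x₀ k| = 1)

include hx₀ hk

theorem lassoPosterior_real_setOf_mul_nonpos_and_le_le (hβ : 0 < β) {L : ℝ} (hL : 0 < L) (M : ℝ) :
    (lassoPosterior A y β).real {x | x k * residualCorrelation A y x₀ k ≤ 0 ∧
        2 * β * (lassoObjective A y x - lassoObjective A y x₀) ≤ M} ≤
      Real.exp (M + (1 + L) ^ 2 * (∑ j, A j k ^ 2) * M ^ 2 / (8 * β)) / L := by
  classical
  have hdet : (reflectStretch k L).toAffineMap.linear.det = -L := det_reflectStretch k L
  have hcont : Continuous (lassoObjective A y) :=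
    continuousOn_univ.1 ((convexOn_lassoObjective A y).continuousOn isOpen_univ)
  refine (tilted_real_le_of_affineMap (T := (reflectStretch k L).toAffineMap)
    (hcont.measurable.const_mul _) (by rw [hdet]; exact neg_ne_zero.2 hL.ne') ?_).trans_eq
    (by rw [hdet, abs_neg, abs_of_pos hL])
  rintro x ⟨hx, hxM⟩
  have hx_abs : x k * residualCorrelation A y x₀ k = -|x k| := by
    rw [← mul_one |x k|, ← hk, ← abs_mul, abs_of_nonpos hx, neg_neg]
  have hincrease := lassoObjective_reflectStretch_le hx₀ hL.le hx_abs
  have hD : 0 ≤ lassoObjective A y x - lassoObjective A y x₀ :=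
    sub_nonneg.2 (isMinOn_univ_iff.1 hx₀ x)
  rw [LinearMap.coe_toAffineMap]
  set D := lassoObjective A y x - lassoObjective A y x₀
  set C := (1 + L) ^ 2 * ∑ j, A j k ^ 2
  have hquad : 2 * β * (C / 4 * D ^ 2) ≤ C * M ^ 2 / (8 * β) := by
    calc 2 * β * (C / 4 * D ^ 2) = C * (2 * β * D) ^ 2 / (8 * β) := by field_simp; ring
      _ ≤ C * M ^ 2 / (8 * β) := by gcongr
  have hscaled := mul_le_mul_of_nonneg_left hincrease (by positivity : 0 ≤ 2 * β)
  linarith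

theorem lassoPosterior_real_setOf_mul_nonpos_le (hβ : 0 < β) {L : ℝ} (hL : 0 < L) (M : ℝ) :
    (lassoPosterior A y β).real {x | x k * residualCorrelation A y x₀ k ≤ 0} ≤
      2 ^ Fintype.card ι * Real.exp (-M / 2) +
        Real.exp (M + (1 + L) ^ 2 * (∑ j, A j k ^ 2) * M ^ 2 / (8 * β)) / L := by
  refine (measureReal_mono fun x hx ↦ ?_).trans ((measureReal_union_le _ _).trans
    (add_le_add (lassoPosterior_real_setOf_lt_le hβ.le x₀ M)
      (lassoPosterior_real_setOf_mul_nonpos_and_le_le hx₀ hk hβ hL M)))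
  exact (lt_or_ge M _).imp_right fun hM ↦ ⟨hx, hM⟩

theorem tendsto_lassoPosterior_real_setOf_mul_nonpos :
    Tendsto (fun β ↦ (lassoPosterior A y β).real {x | x k * residualCorrelation A y x₀ k ≤ 0})
      atTop (𝓝 0) := by
  have hbound : Tendsto (fun M : ℝ ↦ 2 ^ Fintype.card ι * Real.exp (-M / 2) + Real.exp (1 - M))
      atTop (𝓝 (2 ^ Fintype.card ι * 0 + 0)) := by
    refine ((Real.tendsto_exp_atBot.comp ?_).const_mul _).add (Real.tendsto_exp_atBot.comp ?_)
    · exact tendsto_neg_atTop_atBot.atBot_div_const two_pos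
    · exact tendsto_const_nhds.add_atBot tendsto_neg_atTop_atBot
  rw [mul_zero, add_zero] at hbound
  refine tendsto_order.2 ⟨fun a ha ↦ .of_forall fun β ↦ ha.trans_le measureReal_nonneg,
    fun ε hε ↦ ?_⟩
  obtain ⟨M, hM⟩ := (hbound.eventually_lt_const hε).exists
  filter_upwards [eventually_gt_atTop 0, eventually_ge_atTop
    ((1 + Real.exp (2 * M)) ^ 2 * (∑ j, A j k ^ 2) * M ^ 2 / 8)] with β hβ hβM
  have hquad : (1 + Real.exp (2 * M)) ^ 2 * (∑ j, A j k ^ 2) * M ^ 2 / (8 * β) ≤ 1 := by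
    rw [div_le_one (by positivity)]
    linarith
  refine (lassoPosterior_real_setOf_mul_nonpos_le hx₀ hk hβ (Real.exp_pos (2 * M)) M).trans_lt
    (lt_of_le_of_lt ?_ hM)
  rw [← Real.exp_sub]
  exact add_le_add le_rfl (Real.exp_le_exp.2 (by linarith))

theorem posterior_orthant_negligible_general {E : Set (ι → ℝ)}
    (hE : ∀ x ∈ E, x k * residualCorrelation A y x₀ k ≤ 0) :
    Tendsto (fun β : ℝ ↦ (∫ x in E, Real.exp (-2 * β * lassoObjective A y x)) /
      ∫ x, Real.exp (-2 * β * lassoObjective A y x)) atTop (𝓝 0) := by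
  simp only [← tilted_real_apply]
  exact squeeze_zero (fun β ↦ measureReal_nonneg) (fun β ↦ measureReal_mono hE)
    (tendsto_lassoPosterior_real_setOf_mul_nonpos hx₀ hk)

end Posterior

/-- Under invertibility of `A_{∂I}ᵀA_{∂I}`, for any partition `K⁻ ∪ K⁺ = ∂I₀` with
`K⁻ ≠ ∅`, the posterior probability of the orthant-type set
`{x : xᵢξᵢ ≤ 0 on K⁻, xᵢξᵢ ≥ 0 on K⁺}` tends to `0` as `β → +∞`. -/
theorem posterior_orthant_negligible (p n : ℕ) (A : Matrix (Fin n) (Fin p) ℝ)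
    (y : Fin n → ℝ) (F : (Fin p → ℝ) → ℝ)
    (hF : ∀ x, F x = (∑ i, |x i|) + (∑ j, (A.mulVec x j - y j) ^ 2) / 2)
    (x₀ : Fin p → ℝ) (hx₀ : ∀ z, F x₀ ≤ F z)
    (ξ : Fin p → ℝ) (hξ : ξ = A.transpose.mulVec (y - A.mulVec x₀))
    (hind : LinearIndependent ℝ
      (fun i : {i : Fin p // |ξ i| = 1} => (fun j => A j i.1 : Fin n → ℝ)))
    (Kneg Kpos : Set (Fin p)) (hdisj : Disjoint Kneg Kpos)
    (hunion : Kneg ∪ Kpos = {i | x₀ i = 0 ∧ |ξ i| = 1})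
    (hne : Kneg.Nonempty) :
    Filter.Tendsto (fun β : ℝ =>
        (∫ x in {x : Fin p → ℝ |
            (∀ i ∈ Kneg, x i * ξ i ≤ 0) ∧ (∀ i ∈ Kpos, 0 ≤ x i * ξ i)},
          Real.exp (-2 * β * F x)) /
        (∫ x : Fin p → ℝ, Real.exp (-2 * β * F x)))
      Filter.atTop (nhds 0) := by
  obtain rfl : F = lassoObjective A y := funext hF
  subst hξ
  obtain ⟨k, hk⟩ := hne
  exact posterior_orthant_negligible_general (isMinOn_univ_iff.2 hx₀)
    (hunion.subset (Or.inl hk)).2 fun x hx ↦ hx.1 k hk
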